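/- Let T₀ : 𝕊¹ → 𝕊¹ be an orientation-preserving C¹ diffeomorphism of the circle whose rotation number α is irrational and such that log(T₀′) has bounded variation, and let μ₀ be its unique invariant Borel probability measure. For N ≥ 1 let P_N : 𝕊¹ → 𝕊¹ be the projection to the uniform grid E_N = { i/N : 1 ≤ i ≤ N }, P_N(x) = ⌊Nx⌋/N, and let T_N := P_N ∘ T₀ be the N-discretization of T₀. For each N let μ_N be a T_N-invariant Borel probability measure. Then for every continuous function f : 𝕊¹ → ℝ, lim_{N → ∞} ∫ f dμ_N = ∫ f dμ₀. -/

import Mathlib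

/-!
A circle homeomorphism with irrational rotation number is uniquely ergodic, and the statement
follows from this by a compactness argument.

*Unique ergodicity.* For a Borel probability measure `μ` on the circle put
`cdfLift μ x = ∫ ⌈x - r(c)⌉ dμ(c)`, where `r(c) ∈ [0,1)` represents `c`. Since `⌈x - r(c)⌉` counts
the lifts of `c` in `[0, x)` (for `x ≥ 0`), this is the lift to `ℝ` of the distribution function of
`μ`. It is monotone, commutes with `x ↦ x + 1` and stays within distance `1` of the identity.
As `F` carries the lifts of `c` in `[y, x)` bijectively to the lifts of `T₀ c` in `[F y, F x)`,
invariance of `μ` makes `cdfLift μ (F x) - cdfLift μ x` a constant, which must be the rotation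
number `α` (`cdfLift_semiconj`). Thus, for two invariant measures, the normalized functions
`cdfLift μ - cdfLift μ 0` agree on the points `F^n(0) + m`, with values `nα + m`. These values are
dense in `ℝ`, and monotonicity forces the two functions to coincide (`le_of_semiconj`), so the
measures coincide too (`invariant_unique`).

*Conclusion.* The space of probability measures on the circle is compact. Because `P_N` moves points
by at most `1/N`, every cluster point of `(μ_N)` is `T₀`-invariant (`limit_invariant`), hence equal
to `μ₀`.
-/

open MeasureTheory Filter Topology

/-- The projection `P_N(x) = ⌊Nx⌋/N` of the circle onto the uniform grid
`E_N = { i/N : 1 ≤ i ≤ N }`, computed via the canonical representative in `[0,1)`. -/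
noncomputable def gridProj (N : ℕ) : AddCircle (1:ℝ) → AddCircle (1:ℝ) :=
  fun x =>
    (((⌊(N : ℝ) * ((AddCircle.equivIco 1 0 x : ℝ))⌋ : ℝ) / (N : ℝ) : ℝ) : AddCircle (1:ℝ))

/-! ### The lifted distribution function -/

/-- The representative in `[0,1)` of a point of the circle. -/
noncomputable def rep (c : AddCircle (1:ℝ)) : ℝ := (AddCircle.equivIco 1 0 c : ℝ)

lemma rep_nonneg (c) : 0 ≤ rep c := (AddCircle.equivIco 1 0 c).2.1

lemma rep_lt_one (c) : rep c < 1 := by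
  have h := (AddCircle.equivIco (1:ℝ) 0 c).2.2
  exact h.trans_eq (zero_add 1)

lemma coe_rep (c) : ((rep c : ℝ) : AddCircle (1:ℝ)) = c := AddCircle.coe_equivIco

lemma measurable_rep : Measurable rep :=
  measurable_subtype_coe.comp (AddCircle.measurableEquivIco (1:ℝ) 0).measurable

/-- The lift to `ℝ` of the distribution function of a measure on the circle, up to an additive
constant. -/
noncomputable def cdfLift (μ : Measure (AddCircle (1:ℝ))) (x : ℝ) : ℝ :=
  ∫ c, (⌈x - rep c⌉ : ℝ) ∂μ

lemma measurable_ceil_rep (x : ℝ) : Measurable fun c => (⌈x - rep c⌉ : ℝ) := by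
  have h : Measurable fun c => ⌈x - rep c⌉ := Int.measurable_ceil.comp
    (measurable_const.sub measurable_rep)
  exact (measurable_from_top (f := fun n : ℤ => (n : ℝ))).comp h

lemma ceil_rep_bounds (x : ℝ) (c) : x - 1 ≤ (⌈x - rep c⌉ : ℝ) ∧ (⌈x - rep c⌉ : ℝ) ≤ x + 1 := by
  have h1 := Int.le_ceil (x - rep c)
  have h2 := Int.ceil_lt_add_one (x - rep c)
  have := rep_nonneg c
  have := rep_lt_one c
  constructor <;> linarith

section
variable (μ : Measure (AddCircle (1:ℝ))) [IsProbabilityMeasure μ]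

lemma integrable_ceil_rep (x : ℝ) : Integrable (fun c => (⌈x - rep c⌉ : ℝ)) μ := by
  refine Integrable.of_bound (measurable_ceil_rep x).aestronglyMeasurable (|x| + 1)
    (Eventually.of_forall fun c => ?_)
  have h := ceil_rep_bounds x c
  rw [Real.norm_eq_abs, abs_le]
  constructor <;> linarith [neg_abs_le x, le_abs_self x]

lemma cdfLift_mono : Monotone (cdfLift μ) := by
  intro x y hxy
  refine integral_mono (integrable_ceil_rep μ x) (integrable_ceil_rep μ y) fun c => ?_
  have : ⌈x - rep c⌉ ≤ ⌈y - rep c⌉ := Int.ceil_mono (by linarith)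
  exact Int.cast_le.2 this

lemma cdfLift_bounds (x : ℝ) : x - 1 ≤ cdfLift μ x ∧ cdfLift μ x ≤ x + 1 := by
  unfold cdfLift
  constructor
  · simpa using integral_mono (integrable_const (x - 1)) (integrable_ceil_rep μ x)
      fun c => (ceil_rep_bounds x c).1
  · simpa using integral_mono (integrable_ceil_rep μ x) (integrable_const (x + 1))
      fun c => (ceil_rep_bounds x c).2

lemma cdfLift_add_one (x : ℝ) : cdfLift μ (x + 1) = cdfLift μ x + 1 := by
  have h : ∀ c, (⌈x + 1 - rep c⌉ : ℝ) = ⌈x - rep c⌉ + 1 := fun c => by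
    rw [show x + 1 - rep c = x - rep c + 1 by ring, Int.ceil_add_one]; push_cast; ring
  unfold cdfLift
  simp_rw [h]
  rw [integral_add (integrable_ceil_rep μ x) (integrable_const _)]
  simp

lemma cdfLift_sub_zero {x : ℝ} (hx : x ∈ Set.Icc (0:ℝ) 1) :
    cdfLift μ x - cdfLift μ 0 = μ.real {c | rep c < x} := by
  unfold cdfLift
  rw [← integral_sub (integrable_ceil_rep μ x) (integrable_ceil_rep μ 0),
    ← integral_indicator_one (measurableSet_lt measurable_rep measurable_const)]
  congr 1
  ext c
  have h0 := rep_nonneg c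
  have h1 := rep_lt_one c
  have e0 : ⌈0 - rep c⌉ = 0 := by
    rw [Int.ceil_eq_iff]; constructor <;> push_cast <;> linarith
  by_cases h : rep c < x
  · have e1 : ⌈x - rep c⌉ = 1 := by
      rw [Int.ceil_eq_iff]; constructor <;> push_cast <;> linarith [hx.2]
    simp [e0, e1, h, -zero_sub]
  · have e1 : ⌈x - rep c⌉ = 0 := by
      rw [Int.ceil_eq_iff]; constructor <;> push_cast <;> linarith [hx.1]
    simp [e0, e1, h, -zero_sub]

end

/-! ### Unique ergodicity -/

lemma add_int_of_add_one {g : ℝ → ℝ} (h : ∀ x, g (x + 1) = g x + 1) (x : ℝ) (m : ℤ) :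
    g (x + m) = g x + m := by
  induction m using Int.induction_on with
  | zero => simp
  | succ i ih => push_cast at *; rw [← add_assoc, h, ih]; ring
  | pred i ih =>
    have := h (x + ((-(i:ℤ) - 1 : ℤ) : ℝ))
    push_cast at *
    rw [show x + (-(i:ℝ) - 1) + 1 = x + -(i:ℝ) by ring, ih] at this
    linarith

lemma iterate_semiconj {F g : ℝ → ℝ} {c : ℝ} (h : ∀ x, g (F x) = g x + c) (n : ℕ) (x : ℝ) :
    g (F^[n] x) = g x + n * c := by
  induction n with
  | zero => simp
  | succ n ih => rw [Function.iterate_succ_apply', h, ih]; push_cast; ring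

/-- `F` preserves the number of lifts of a point in a half-open interval. -/
lemma ceil_lift {F : ℝ → ℝ} (hm : StrictMono F) (h1 : ∀ x, F (x + 1) = F x + 1) (x r : ℝ) :
    ⌈F x - F r⌉ = ⌈x - r⌉ := by
  rw [Int.ceil_eq_iff]
  have a := Int.le_ceil (x - r)
  have b := Int.ceil_lt_add_one (x - r)
  have e1 := add_int_of_add_one h1 r ⌈x - r⌉
  have e2 := add_int_of_add_one h1 r (⌈x - r⌉ - 1)
  have i1 : F x ≤ F (r + ⌈x - r⌉) := hm.monotone (by linarith)
  have i2 : F (r + (⌈x - r⌉ - 1 : ℤ)) < F x := hm (by push_cast; linarith)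
  push_cast at *
  constructor <;> linarith

/-- The lifted distribution function of an invariant measure semiconjugates `F` to the translation
by its rotation number. -/
lemma cdfLift_semiconj {T₀ : AddCircle (1:ℝ) → AddCircle (1:ℝ)} {F : ℝ → ℝ} {α : ℝ}
    (hm : StrictMono F) (h1 : ∀ x, F (x + 1) = F x + 1)
    (hT : Measurable T₀)
    (hlift : ∀ x : ℝ, T₀ (x : AddCircle (1:ℝ)) = (F x : AddCircle (1:ℝ)))
    (hrot : Tendsto (fun n : ℕ => F^[n] 0 / n) atTop (nhds α))
    (μ : Measure (AddCircle (1:ℝ))) [IsProbabilityMeasure μ] (hinv : Measure.map T₀ μ = μ) (x : ℝ) :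
    cdfLift μ (F x) = cdfLift μ x + α := by
  have hpull : ∀ x, cdfLift μ x = ∫ c, (⌈x - rep (T₀ c)⌉ : ℝ) ∂μ := by
    intro x
    conv_lhs => rw [cdfLift, ← hinv]
    exact integral_map hT.aemeasurable (measurable_ceil_rep x).aestronglyMeasurable
  have hint : ∀ x, Integrable (fun c => (⌈x - rep (T₀ c)⌉ : ℝ)) μ := by
    intro x
    refine Integrable.comp_measurable (f := T₀) (g := fun c => (⌈x - rep c⌉ : ℝ)) ?_ hT
    rw [hinv]
    exact integrable_ceil_rep μ x
  -- The representative of `T₀ c` differs from `F (rep c)` by an integer depending only on `c`.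
  have hk : ∀ c, ∃ k : ℤ, rep (T₀ c) = F (rep c) + k := by
    intro c
    have h : ((rep (T₀ c) - F (rep c) : ℝ) : AddCircle (1:ℝ)) = 0 := by
      rw [AddCircle.coe_sub, coe_rep, ← hlift, coe_rep, sub_self]
    obtain ⟨k, hk⟩ := (AddCircle.coe_eq_zero_iff (1:ℝ)).1 h
    refine ⟨k, ?_⟩
    simp at hk
    linarith
  choose k hk using hk
  have hconst : ∀ x, cdfLift μ (F x) = cdfLift μ x + ∫ c, -(k c : ℝ) ∂μ := by
    intro x
    have : cdfLift μ (F x) - cdfLift μ x = ∫ c, -(k c : ℝ) ∂μ := by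
      rw [hpull (F x), cdfLift, ← integral_sub (hint _) (integrable_ceil_rep μ x)]
      congr 1
      ext c
      rw [hk, ← sub_sub, Int.ceil_sub_intCast, ceil_lift hm h1]
      push_cast
      ring
    linarith
  set b := ∫ c, -(k c : ℝ) ∂μ
  -- The constant is the rotation number because `cdfLift μ` is at bounded distance from `id`.
  have hb : Tendsto (fun n : ℕ => F^[n] 0 / n) atTop (nhds b) := by
    have hz : Tendsto (fun n : ℕ => (2:ℝ) / n) atTop (nhds 0) :=
      tendsto_const_div_atTop_nhds_zero_nat 2
    rw [tendsto_iff_norm_sub_tendsto_zero]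
    refine squeeze_zero' (Eventually.of_forall fun _ => norm_nonneg _) ?_ hz
    filter_upwards [eventually_gt_atTop 0] with n hn
    have hn' : (0:ℝ) < n := by exact_mod_cast hn
    have e := iterate_semiconj hconst n 0
    have b1 := cdfLift_bounds μ (F^[n] 0)
    have b2 := cdfLift_bounds μ 0
    rw [show F^[n] 0 / n - b = (F^[n] 0 - n * b) / n by field_simp, norm_div,
      Real.norm_of_nonneg hn'.le]
    gcongr
    rw [Real.norm_eq_abs, abs_le]
    constructor <;> linarith
  rw [hconst, tendsto_nhds_unique hb hrot]

/-- A normalized monotone semiconjugacy to an irrational translation is unique. -/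
lemma le_of_semiconj {F g₁ g₂ : ℝ → ℝ} {α : ℝ} (hα : Irrational α)
    (m₁ : Monotone g₁) (m₂ : Monotone g₂)
    (t₁ : ∀ x, g₁ (x + 1) = g₁ x + 1) (t₂ : ∀ x, g₂ (x + 1) = g₂ x + 1)
    (s₁ : ∀ x, g₁ (F x) = g₁ x + α) (s₂ : ∀ x, g₂ (F x) = g₂ x + α)
    (z₁ : g₁ 0 = 0) (z₂ : g₂ 0 = 0) (x : ℝ) : g₁ x ≤ g₂ x := by
  by_contra! hlt
  have hd : Dense (AddSubgroup.closure {α, 1} : Set ℝ) :=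
    dense_addSubgroupClosure_pair_iff.2 (by simpa using hα)
  obtain ⟨q, hq, hq1, hq2⟩ := hd.exists_between hlt
  obtain ⟨n, m, rfl⟩ := AddSubgroup.mem_closure_pair.1 hq
  simp only [zsmul_eq_mul, mul_one] at hq1 hq2
  obtain ⟨k, rfl | rfl⟩ := n.eq_nat_or_neg
  · -- The point `F^k(0) + m` lies strictly on both sides of `x`.
    have e₁ := add_int_of_add_one t₁ (F^[k] 0) m
    have e₂ := add_int_of_add_one t₂ (F^[k] 0) m
    rw [iterate_semiconj s₁, z₁] at e₁
    rw [iterate_semiconj s₂, z₂] at e₂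
    push_cast at *
    have i₁ := m₁.reflect_lt (a := F^[k] 0 + m) (b := x) (by linarith)
    have i₂ := m₂.reflect_lt (a := x) (b := F^[k] 0 + m) (by linarith)
    exact lt_asymm i₁ i₂
  · -- The integer `m` lies strictly on both sides of `F^k(x)`.
    have e₁ := add_int_of_add_one t₁ 0 m
    have e₂ := add_int_of_add_one t₂ 0 m
    have f₁ := iterate_semiconj s₁ k x
    have f₂ := iterate_semiconj s₂ k x
    push_cast at *
    have i₁ := m₁.reflect_lt (a := 0 + m) (b := F^[k] x) (by linarith)
    have i₂ := m₂.reflect_lt (a := F^[k] x) (b := 0 + m) (by linarith)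
    exact lt_asymm i₁ i₂

lemma measure_ext_of_rep_lt {μ ν : Measure (AddCircle (1:ℝ))} [IsProbabilityMeasure μ]
    [IsProbabilityMeasure ν]
    (h : ∀ x ∈ Set.Icc (0:ℝ) 1, μ.real {c | rep c < x} = ν.real {c | rep c < x}) : μ = ν := by
  have hlt : ∀ x : ℝ, μ {c | rep c < x} = ν {c | rep c < x} := by
    intro x
    rcases lt_or_ge x 0 with hx | hx
    · have : {c | rep c < x} = ∅ := by
        ext c; simpa using hx.le.trans (rep_nonneg c)
      simp [this]
    rcases lt_or_ge 1 x with hx' | hx'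
    · have : {c | rep c < x} = Set.univ := by
        ext c; simpa using (rep_lt_one c).trans hx'
      simp [this]
    · exact (measureReal_eq_measureReal_iff).1 (h x ⟨hx, hx'⟩)
  have hp : IsProbabilityMeasure (μ.map rep) :=
    Measure.isProbabilityMeasure_map measurable_rep.aemeasurable
  have hp' : IsProbabilityMeasure (ν.map rep) :=
    Measure.isProbabilityMeasure_map measurable_rep.aemeasurable
  have hmap : μ.map rep = ν.map rep := by
    refine Measure.ext_of_Ici _ _ fun a => ?_
    have hI : (Set.Iio a)ᶜ = Set.Ici a := Set.compl_Iio
    rw [← hI, prob_compl_eq_one_sub measurableSet_Iio, prob_compl_eq_one_sub measurableSet_Iio,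
      Measure.map_apply measurable_rep measurableSet_Iio,
      Measure.map_apply measurable_rep measurableSet_Iio]
    exact congrArg (1 - ·) (hlt a)
  have hback : ∀ ρ : Measure (AddCircle (1:ℝ)),
      (ρ.map rep).map (fun x : ℝ => (x : AddCircle (1:ℝ))) = ρ := by
    intro ρ
    rw [Measure.map_map AddCircle.measurable_mk' measurable_rep]
    have : (fun x : ℝ => (x : AddCircle (1:ℝ))) ∘ rep = id := funext coe_rep
    rw [this, Measure.map_id]
  rw [← hback μ, hmap, hback]

/-- Unique ergodicity of circle homeomorphisms with irrational rotation number. -/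
lemma invariant_unique {T₀ : AddCircle (1:ℝ) → AddCircle (1:ℝ)} {F : ℝ → ℝ} {α : ℝ}
    (hm : StrictMono F) (h1 : ∀ x, F (x + 1) = F x + 1) (hT : Measurable T₀)
    (hlift : ∀ x : ℝ, T₀ (x : AddCircle (1:ℝ)) = (F x : AddCircle (1:ℝ))) (hα : Irrational α)
    (hrot : Tendsto (fun n : ℕ => F^[n] 0 / n) atTop (nhds α))
    (μ ν : Measure (AddCircle (1:ℝ))) [IsProbabilityMeasure μ] [IsProbabilityMeasure ν]
    (hμ : Measure.map T₀ μ = μ) (hν : Measure.map T₀ ν = ν) : μ = ν := by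
  have key : ∀ (μ ν : Measure (AddCircle (1:ℝ))) [IsProbabilityMeasure μ] [IsProbabilityMeasure ν],
      Measure.map T₀ μ = μ → Measure.map T₀ ν = ν → ∀ x,
      cdfLift μ x - cdfLift μ 0 ≤ cdfLift ν x - cdfLift ν 0 := by
    intro μ ν _ _ hμ hν x
    refine le_of_semiconj (F := F) (g₁ := fun x => cdfLift μ x - cdfLift μ 0)
      (g₂ := fun x => cdfLift ν x - cdfLift ν 0) hα ?_ ?_ ?_ ?_ ?_ ?_ (by simp) (by simp) x
    · exact fun a b hab => sub_le_sub_right (cdfLift_mono μ hab) _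
    · exact fun a b hab => sub_le_sub_right (cdfLift_mono ν hab) _
    · intro x; simp only [cdfLift_add_one]; ring
    · intro x; simp only [cdfLift_add_one]; ring
    · intro x; simp only [cdfLift_semiconj hm h1 hT hlift hrot μ hμ]; ring
    · intro x; simp only [cdfLift_semiconj hm h1 hT hlift hrot ν hν]; ring
  refine measure_ext_of_rep_lt fun x hx => ?_
  rw [← cdfLift_sub_zero μ hx, ← cdfLift_sub_zero ν hx]
  exact le_antisymm (key μ ν hμ hν x) (key ν μ hν hμ x)

/-! ### Discretizations and their limit measures -/

lemma dist_gridProj_le {N : ℕ} (hN : 1 ≤ N) (x : AddCircle (1:ℝ)) :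
    dist (gridProj N x) x ≤ 1 / N := by
  have hN' : (0:ℝ) < N := by exact_mod_cast hN
  have e : gridProj N x - x = (((⌊(N:ℝ) * rep x⌋ : ℝ) / N - rep x : ℝ) : AddCircle (1:ℝ)) := by
    rw [AddCircle.coe_sub, coe_rep]; rfl
  rw [dist_eq_norm, e]
  refine (QuotientAddGroup.norm_mk_le_norm).trans ?_
  have h1 := Int.floor_le ((N:ℝ) * rep x)
  have h2 := Int.lt_floor_add_one ((N:ℝ) * rep x)
  rw [show (⌊(N:ℝ) * rep x⌋ : ℝ) / N - rep x = (⌊(N:ℝ) * rep x⌋ - N * rep x) / N by field_simp,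
    norm_div, Real.norm_of_nonneg hN'.le]
  gcongr
  rw [Real.norm_eq_abs, abs_le]
  constructor <;> linarith

/-- The invariance defect of a `T_N`-invariant measure under `T₀` vanishes as `N → ∞`, by uniform
continuity of the test function. -/
lemma defect_tendsto {T₀ : AddCircle (1:ℝ) → AddCircle (1:ℝ)} (hT : Continuous T₀)
    (μ : ℕ → Measure (AddCircle (1:ℝ)))
    (hprob : ∀ N : ℕ, 1 ≤ N → IsProbabilityMeasure (μ N))
    (hinv : ∀ N : ℕ, 1 ≤ N → Measure.map (gridProj N ∘ T₀) (μ N) = μ N)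
    {f : AddCircle (1:ℝ) → ℝ} (hf : Continuous f) :
    Tendsto (fun N => ∫ x, f x ∂(μ N) - ∫ x, f (T₀ x) ∂(μ N)) atTop (nhds 0) := by
  rw [Metric.tendsto_atTop]
  intro ε hε
  obtain ⟨δ, hδ, hu⟩ := Metric.uniformContinuous_iff.1
    (CompactSpace.uniformContinuous_of_continuous hf) (ε / 2) (by positivity)
  obtain ⟨M, hM⟩ := exists_nat_one_div_lt hδ
  refine ⟨M + 1, fun N hN => ?_⟩
  have hN1 : 1 ≤ N := by omega
  have := hprob N hN1
  -- A non-measurable map would push `μ N` forward to the zero measure.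
  have hae : AEMeasurable (gridProj N ∘ T₀) (μ N) := by
    by_contra h
    have h0 := hinv N hN1
    rw [Measure.map_of_not_aemeasurable h] at h0
    exact IsProbabilityMeasure.ne_zero (μ N) h0.symm
  have e : ∫ x, f x ∂(μ N) = ∫ x, f (gridProj N (T₀ x)) ∂(μ N) := by
    conv_lhs => rw [← hinv N hN1]
    exact integral_map hae hf.aestronglyMeasurable
  obtain ⟨C, hC⟩ := isCompact_univ.exists_bound_of_continuousOn hf.continuousOn
  have i1 : Integrable (fun x => f (gridProj N (T₀ x))) (μ N) :=
    Integrable.of_bound (hf.measurable.comp_aemeasurable hae).aestronglyMeasurable C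
      (Eventually.of_forall fun x => hC _ trivial)
  have i2 : Integrable (fun x => f (T₀ x)) (μ N) :=
    Integrable.of_bound (hf.comp hT).aestronglyMeasurable C
      (Eventually.of_forall fun x => hC _ trivial)
  rw [dist_zero_right, e, ← integral_sub i1 i2]
  have hclose : ∀ x, ‖f (gridProj N (T₀ x)) - f (T₀ x)‖ ≤ ε / 2 := by
    intro x
    rw [← dist_eq_norm]
    refine (hu ((dist_gridProj_le hN1 _).trans_lt (lt_of_le_of_lt ?_ hM))).le
    gcongr
    exact_mod_cast hN
  have := norm_integral_le_of_norm_le_const (μ := μ N) (Eventually.of_forall hclose)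
  simp at this ⊢
  linarith

/-- A limit, along an ultrafilter finer than `atTop`, of `T_N`-invariant measures is
`T₀`-invariant. -/
lemma limit_invariant {T₀ : AddCircle (1:ℝ) → AddCircle (1:ℝ)} (hT : Continuous T₀)
    (ν : ℕ → ProbabilityMeasure (AddCircle (1:ℝ)))
    (hdef : ∀ f : AddCircle (1:ℝ) → ℝ, Continuous f →
      Tendsto (fun N => ∫ x, f x ∂(ν N : Measure (AddCircle (1:ℝ))) -
        ∫ x, f (T₀ x) ∂(ν N : Measure (AddCircle (1:ℝ)))) atTop (nhds 0))
    {U : Ultrafilter ℕ} (hU : (U : Filter ℕ) ≤ atTop) {p : ProbabilityMeasure (AddCircle (1:ℝ))}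
    (hp : Tendsto ν U (nhds p)) :
    Measure.map T₀ (p : Measure (AddCircle (1:ℝ))) = p := by
  have hw := ProbabilityMeasure.tendsto_iff_forall_integral_tendsto.1 hp
  have : IsProbabilityMeasure (Measure.map T₀ (p : Measure (AddCircle (1:ℝ)))) :=
    Measure.isProbabilityMeasure_map hT.aemeasurable
  refine ext_of_forall_integral_eq_of_IsFiniteMeasure fun f => ?_
  rw [integral_map hT.aemeasurable f.continuous.aestronglyMeasurable]
  have h := (hw f).sub (hw (f.compContinuous ⟨T₀, hT⟩))
  have h0 := tendsto_nhds_unique h ((hdef f f.continuous).mono_left hU)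
  exact (sub_eq_zero.1 h0).symm

/-- **Statistical stability under spatial discretization.**
Let `T₀` be an orientation-preserving `C¹` diffeomorphism of the circle, given by a
lift `F` (`C¹`, strictly monotone, `F(x+1) = F(x)+1`, `F' > 0`), with irrational
rotation number `α = lim F^n(0)/n` and `log F'` of bounded variation on `[0,1]`, and
let `μ₀` be its invariant Borel probability measure.  Let `T_N := P_N ∘ T₀` be its
`N`-discretizations and `μ_N` be `T_N`-invariant Borel probability measures.  Then
`∫ f dμ_N → ∫ f dμ₀` for every continuous `f : 𝕊¹ → ℝ`. -/
theorem statistical_stability_discretization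
    (T₀ : AddCircle (1:ℝ) → AddCircle (1:ℝ)) (F : ℝ → ℝ)
    (hFreg : ContDiff ℝ 1 F)
    (hFmono : StrictMono F)
    (hFper : ∀ x : ℝ, F (x + 1) = F x + 1)
    (hF' : ∀ x : ℝ, 0 < deriv F x)
    (hlift : ∀ x : ℝ, T₀ ((x : ℝ) : AddCircle (1:ℝ)) = ((F x : ℝ) : AddCircle (1:ℝ)))
    (hbij : Function.Bijective T₀)
    (α : ℝ) (hα : Irrational α)
    (hrot : Tendsto (fun n : ℕ => F^[n] 0 / n) atTop (nhds α))
    (hBV : BoundedVariationOn (fun x => Real.log (deriv F x)) (Set.Icc (0:ℝ) 1))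
    (μ₀ : Measure (AddCircle (1:ℝ))) (hμ₀prob : IsProbabilityMeasure μ₀)
    (hμ₀inv : Measure.map T₀ μ₀ = μ₀)
    (μ : ℕ → Measure (AddCircle (1:ℝ)))
    (hprob : ∀ N : ℕ, 1 ≤ N → IsProbabilityMeasure (μ N))
    (hinv : ∀ N : ℕ, 1 ≤ N → Measure.map (gridProj N ∘ T₀) (μ N) = μ N) :
    ∀ f : AddCircle (1:ℝ) → ℝ, Continuous f →
      Tendsto (fun N => ∫ x, f x ∂(μ N)) atTop (nhds (∫ x, f x ∂μ₀)) := by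
  intro f hf
  have hT : Continuous T₀ := by
    refine continuous_coinduced_dom.2 ?_
    have : T₀ ∘ (fun x : ℝ => (x : AddCircle (1:ℝ))) = fun x => (F x : AddCircle (1:ℝ)) :=
      funext hlift
    exact this ▸ (AddCircle.continuous_mk' 1).comp hFreg.continuous
  -- The measure `μ 0` is arbitrary, and is replaced by `μ₀`.
  let ν : ℕ → ProbabilityMeasure (AddCircle (1:ℝ)) := fun N =>
    if h : 1 ≤ N then ⟨μ N, hprob N h⟩ else ⟨μ₀, hμ₀prob⟩
  have hνμ : ∀ᶠ N in atTop, (ν N : Measure (AddCircle (1:ℝ))) = μ N := by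
    filter_upwards [eventually_ge_atTop 1] with N hN
    simp [ν, hN]
  have hν : Tendsto ν atTop (nhds ⟨μ₀, hμ₀prob⟩) := by
    rw [tendsto_iff_ultrafilter]
    intro U hU
    obtain ⟨p, -, hp⟩ := isCompact_univ.ultrafilter_le_nhds (U.map ν) (by simp)
    have hp' : Tendsto ν U (nhds p) := hp
    have hpinv := limit_invariant hT ν (fun g hg =>
      (defect_tendsto hT μ hprob hinv hg).congr' (by
        filter_upwards [hνμ] with N hN
        rw [hN])) hU hp'
    have : (p : Measure (AddCircle (1:ℝ))) = μ₀ :=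
      invariant_unique hFmono hFper hT.measurable hlift hα hrot p μ₀ hpinv hμ₀inv
    have hpe : p = ⟨μ₀, hμ₀prob⟩ := Subtype.ext this
    rwa [← hpe]
  have h := ProbabilityMeasure.tendsto_iff_forall_integral_tendsto.1 hν
    (BoundedContinuousFunction.mkOfCompact ⟨f, hf⟩)
  refine Tendsto.congr' ?_ h
  filter_upwards [hνμ] with N hN
  rw [hN]
  rfl
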